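/- Let q_-, q_+, a > 0 be real constants, κ ∈ L^∞(-1,1), and ψ : ℝ → ℝ be smooth with compact support. Define Q_ε(x) = q_- /x for −a < x < −ε, Q_ε(x) = q_+/x for ε < x < a, Q_ε(x) = (ln ε/ε) κ(x/ε) for |x| < ε, and Q_ε(x) = 0 for |x| ≥ a. Then the limit of ∫_ℝ Q_ε ψ dx as ε → 0+ exists for every such ψ if and only if q_+ − q_- = ∫_{-1}^{1} κ(t) dt. -/

import Mathlib

open MeasureTheory Filter

lemma key (qm qp a : ℝ) (ha : 0 < a)
    (κ : ℝ → ℝ) (hκm : Measurable κ)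
    (C : ℝ) (hκb : ∀ t, |κ t| ≤ C)
    (Q : ℝ → ℝ → ℝ)
    (hQ : ∀ ε x, Q ε x =
      if |x| < ε then (Real.log ε / ε) * κ (x / ε)
      else if |x| < a then (if x < 0 then qm / x else qp / x)
      else 0) (ψ : ℝ → ℝ) (hd : Differentiable ℝ ψ) :
    ∃ L : ℝ, Tendsto (fun ε : ℝ => (∫ x : ℝ, Q ε x * ψ x)
        - ((∫ t in (-1 : ℝ)..1, κ t) - (qp - qm)) * ψ 0 * Real.log ε)
        (nhdsWithin 0 (Set.Ioi 0)) (nhds L) := by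
  obtain ⟨φ, hφc, hφ⟩ : ∃ φ : ℝ → ℝ, Continuous φ ∧ ∀ x, ψ x = ψ 0 + x * φ x := by
    refine ⟨dslope ψ 0, ?_, ?_⟩
    · rw [← continuousOn_univ]
      exact (continuousOn_dslope (by simp)).2 ⟨hd.continuous.continuousOn, hd 0⟩
    · intro x
      have := sub_smul_dslope ψ 0 x
      simp at this
      linarith
  have hψc : Continuous ψ := hd.continuous
  have hC : 0 ≤ C := (abs_nonneg _).trans (hκb 0)
  -- integrability of bounded times continuous
  have hint : ∀ (f : ℝ → ℝ), Continuous f → ∀ ε u v : ℝ,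
      IntervalIntegrable (fun x => κ (x / ε) * f x) volume u v := by
    intro f hf ε u v
    have h1 : IntervalIntegrable (fun x => C * f x) volume u v :=
      (continuous_const.mul hf).intervalIntegrable u v
    refine h1.mono_fun ?_ ?_
    · exact ((hκm.comp (measurable_id.div_const ε)).mul hf.measurable).aestronglyMeasurable
    · refine Eventually.of_forall fun x => ?_
      simp only [norm_mul, Real.norm_eq_abs, abs_of_nonneg hC]
      exact mul_le_mul_of_nonneg_right (hκb _) (abs_nonneg _)
  have hint1 : ∀ (f : ℝ → ℝ), Continuous f → ∀ u v : ℝ,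
      IntervalIntegrable (fun x => κ x * f x) volume u v := by
    intro f hf u v
    simpa using hint f hf 1 u v
  have hform : ∀ ε, 0 < ε → ε < a → (∫ x : ℝ, Q ε x * ψ x)
        - ((∫ t in (-1 : ℝ)..1, κ t) - (qp - qm)) * ψ 0 * Real.log ε
      = (ε * Real.log ε) * (∫ t in (-1 : ℝ)..1, κ t * (t * φ (ε * t)))
        + qm * (∫ x in (-a)..(-ε), φ x) + qp * (∫ x in ε..a, φ x)
        + ψ 0 * (qp - qm) * Real.log a := by
    intro ε h0 h1
    have hne : ε ≠ 0 := h0.ne'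
    have e0 : (∫ x : ℝ, Q ε x * ψ x) = ∫ x in (-a)..a, Q ε x * ψ x := by
      rw [intervalIntegral.integral_of_le (by linarith)]
      symm
      apply setIntegral_eq_integral_of_forall_compl_eq_zero
      intro x hx
      have hxa : ¬ |x| < a := by
        intro h
        rw [abs_lt] at h
        exact hx ⟨h.1, h.2.le⟩
      have hxe : ¬ |x| < ε := fun h => hxa (h.trans h1)
      rw [hQ, if_neg hxe, if_neg hxa, zero_mul]
    have c1 : ∀ x ∈ Set.Ioo (-a) (-ε), qm * (ψ 0 * x⁻¹ + φ x) = Q ε x * ψ x := by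
      rintro x ⟨hx1, hx2⟩
      have hx0 : x < 0 := by linarith
      rw [hQ, if_neg (by rw [abs_of_neg hx0]; linarith),
        if_pos (by rw [abs_of_neg hx0]; linarith), if_pos hx0, hφ x]
      have := hx0.ne
      field_simp
    have c3 : ∀ x ∈ Set.Ioo ε a, qp * (ψ 0 * x⁻¹ + φ x) = Q ε x * ψ x := by
      rintro x ⟨hx1, hx2⟩
      have hx0 : 0 < x := by linarith
      rw [hQ, if_neg (by rw [abs_of_pos hx0]; linarith),
        if_pos (by rw [abs_of_pos hx0]; linarith), if_neg (by linarith), hφ x]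
      have := hx0.ne'
      field_simp
    have c2 : ∀ x ∈ Set.Ioo (-ε) ε, (Real.log ε / ε) * (κ (x / ε) * ψ x) = Q ε x * ψ x := by
      rintro x hx
      rw [hQ, if_pos (abs_lt.2 hx), mul_assoc]
    have j1 : IntervalIntegrable (fun x : ℝ => ψ 0 * x⁻¹) volume (-a) (-ε) := by
      apply IntervalIntegrable.const_mul
      apply intervalIntegral.intervalIntegrable_inv (f := fun x => x) _ continuousOn_id
      intro x hx
      rw [Set.uIcc_of_le (by linarith)] at hx
      have := hx.2
      intro h
      linarith
    have j3 : IntervalIntegrable (fun x : ℝ => ψ 0 * x⁻¹) volume ε a := by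
      apply IntervalIntegrable.const_mul
      apply intervalIntegral.intervalIntegrable_inv (f := fun x => x) _ continuousOn_id
      intro x hx
      rw [Set.uIcc_of_le (by linarith)] at hx
      have := hx.1
      intro h
      linarith
    have congrI : ∀ (f g : ℝ → ℝ) (u v : ℝ), u ≤ v → (∀ x ∈ Set.Ioo u v, f x = g x) →
        IntervalIntegrable f volume u v →
        IntervalIntegrable g volume u v ∧ ∫ x in u..v, g x = ∫ x in u..v, f x := by
      intro f g u v huv h hf
      constructor
      · rw [intervalIntegrable_iff_integrableOn_Ioo_of_le huv] at hf ⊢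
        exact hf.congr_fun h measurableSet_Ioo
      · rw [intervalIntegral.integral_of_le huv, intervalIntegral.integral_of_le huv,
          integral_Ioc_eq_integral_Ioo, integral_Ioc_eq_integral_Ioo]
        exact setIntegral_congr_fun measurableSet_Ioo (fun x hx => (h x hx).symm)
    obtain ⟨i1, v1⟩ := congrI _ _ (-a) (-ε) (by linarith) c1
      ((j1.add (hφc.intervalIntegrable _ _)).const_mul qm)
    obtain ⟨i2, v2⟩ := congrI _ _ (-ε) ε (by linarith) c2
      ((hint ψ hψc ε (-ε) ε).const_mul _)
    obtain ⟨i3, v3⟩ := congrI _ _ ε a (by linarith) c3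
      ((j3.add (hφc.intervalIntegrable _ _)).const_mul qp)
    rw [e0, ← intervalIntegral.integral_add_adjacent_intervals (i1.trans i2) i3,
      ← intervalIntegral.integral_add_adjacent_intervals i1 i2, v1, v2, v3]
    simp only [intervalIntegral.integral_const_mul]
    rw [intervalIntegral.integral_add j1 (hφc.intervalIntegrable _ _),
      intervalIntegral.integral_add j3 (hφc.intervalIntegrable _ _)]
    simp only [intervalIntegral.integral_const_mul]
    rw [integral_inv_of_neg (by linarith) (by linarith), integral_inv_of_pos h0 ha,
      neg_div_neg_eq, Real.log_div hne ha.ne', Real.log_div ha.ne' hne]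
    have m1 : (∫ x in (-ε)..ε, κ (x / ε) * ψ x)
        = ε * ((∫ t in (-1 : ℝ)..1, κ t) * ψ 0
          + ε * (∫ t in (-1 : ℝ)..1, κ t * (t * φ (ε * t)))) := by
      have hs := intervalIntegral.integral_comp_div (a := -ε) (b := ε)
        (fun t => κ t * ψ (ε * t)) hne
      rw [neg_div, div_self hne] at hs
      have : ∀ x : ℝ, ε * (x / ε) = x := fun x => by field_simp
      simp only [this, smul_eq_mul] at hs
      rw [hs]
      congr 1
      rw [← intervalIntegral.integral_mul_const, ← intervalIntegral.integral_const_mul,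
        ← intervalIntegral.integral_add]
      · apply intervalIntegral.integral_congr
        intro t _
        simp only
        rw [hφ (ε * t)]
        ring
      · exact hint1 _ continuous_const _ _
      · exact (hint1 (fun t => t * φ (ε * t)) (by fun_prop) _ _).const_mul ε
    rw [m1]
    field_simp
    ring
  refine ⟨0 + qm * (∫ x in (-a)..(-0), φ x) + qp * (∫ x in (0:ℝ)..a, φ x)
        + ψ 0 * (qp - qm) * Real.log a, ?_⟩
  have hev : ∀ᶠ ε : ℝ in nhdsWithin 0 (Set.Ioi 0), 0 < ε ∧ ε < a ∧ ε < 1 := by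
    have := Ioo_mem_nhdsGT (show (0:ℝ) < min a 1 by positivity)
    filter_upwards [this] with ε hε
    exact ⟨hε.1, hε.2.trans_le (min_le_left _ _), hε.2.trans_le (min_le_right _ _)⟩
  refine Tendsto.congr' (f₁ := _) (hev.mono fun ε h => (hform ε h.1 h.2.1).symm) ?_
  have hprim : ∀ u, Continuous fun b => ∫ x in u..b, φ x := fun u =>
    intervalIntegral.continuous_primitive (fun _ _ => hφc.intervalIntegrable _ _) u
  refine Tendsto.add (Tendsto.add (Tendsto.add ?_ ?_) ?_) tendsto_const_nhds
  · obtain ⟨M, hM⟩ := (isCompact_Icc (a := (-1:ℝ)) (b := 1)).exists_bound_of_continuousOn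
      hφc.continuousOn
    have t0 : Tendsto (fun ε : ℝ => ε * Real.log ε) (nhdsWithin 0 (Set.Ioi 0)) (nhds 0) := by
      have := (Real.continuous_mul_log.tendsto 0).mono_left
        (nhdsWithin_le_nhds (s := Set.Ioi 0))
      simpa using this
    refine t0.zero_mul_isBoundedUnder_le ⟨C * M * |1 - (-1:ℝ)|, ?_⟩
    rw [eventually_map]
    filter_upwards [hev] with ε hε
    apply intervalIntegral.norm_integral_le_of_norm_le_const
    intro t ht
    rw [Set.uIoc_of_le (by norm_num)] at ht
    have ht1 : |t| ≤ 1 := abs_le.2 ⟨ht.1.le, ht.2⟩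
    have h2 : |ε * t| ≤ 1 := by
      rw [abs_mul, abs_of_pos hε.1]
      nlinarith [abs_nonneg t]
    have h3 := hM (ε * t) (abs_le.1 h2)
    rw [Real.norm_eq_abs] at h3
    rw [Real.norm_eq_abs, abs_mul, abs_mul]
    refine mul_le_mul (hκb t) ?_ (by positivity) hC
    nlinarith [abs_nonneg t, abs_nonneg (φ (ε * t))]
  · have : Continuous fun ε : ℝ => qm * (∫ x in (-a)..(-ε), φ x) :=
      continuous_const.mul ((hprim (-a)).comp continuous_neg)
    exact (this.tendsto 0).mono_left nhdsWithin_le_nhds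
  · have : Continuous fun ε : ℝ => qp * (∫ x in ε..a, φ x) := by
      simp only [fun ε => intervalIntegral.integral_symm (μ := volume) (f := φ) a ε]
      exact continuous_const.mul (hprim a).neg
    exact (this.tendsto 0).mono_left nhdsWithin_le_nhds



/-- The regularized Coulomb-like potentials `Q_ε` converge in the sense of
distributions as `ε → 0+` if and only if `q_+ − q_- = ∫_{-1}^{1} κ`. -/
theorem stmt_4 (qm qp a : ℝ) (ha : 0 < a)
    (κ : ℝ → ℝ) (hκm : Measurable κ)
    (C : ℝ) (hκb : ∀ t ∈ Set.Ioo (-1 : ℝ) 1, |κ t| ≤ C)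
    (Q : ℝ → ℝ → ℝ)
    (hQ : ∀ ε x, Q ε x =
      if |x| < ε then (Real.log ε / ε) * κ (x / ε)
      else if |x| < a then (if x < 0 then qm / x else qp / x)
      else 0) :
    (∀ ψ : ℝ → ℝ, ContDiff ℝ (⊤ : ℕ∞) ψ → HasCompactSupport ψ →
      ∃ l : ℝ, Tendsto (fun ε : ℝ => ∫ x : ℝ, Q ε x * ψ x)
        (nhdsWithin 0 (Set.Ioi 0)) (nhds l)) ↔
    qp - qm = ∫ t in (-1 : ℝ)..1, κ t := by
  classical
  let κ' : ℝ → ℝ := (Set.Ioo (-1:ℝ) 1).indicator κ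
  have hC : 0 ≤ C := (abs_nonneg _).trans (hκb 0 (by norm_num))
  have hK : ∫ t in (-1 : ℝ)..1, κ t = ∫ t in (-1 : ℝ)..1, κ' t := by
    rw [intervalIntegral.integral_of_le (by norm_num),
      intervalIntegral.integral_of_le (by norm_num),
      integral_Ioc_eq_integral_Ioo, integral_Ioc_eq_integral_Ioo]
    exact setIntegral_congr_fun measurableSet_Ioo
      (fun x hx => (Set.indicator_of_mem hx κ).symm)
  have hQ' : ∀ ε x, Q ε x =
      if |x| < ε then (Real.log ε / ε) * κ' (x / ε)
      else if |x| < a then (if x < 0 then qm / x else qp / x)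
      else 0 := by
    intro ε x
    rw [hQ]
    by_cases h : |x| < ε
    · rw [if_pos h, if_pos h]
      have h0 : 0 < ε := (abs_nonneg x).trans_lt h
      have : x / ε ∈ Set.Ioo (-1:ℝ) 1 := by
        rw [Set.mem_Ioo, ← abs_lt, abs_div, abs_of_pos h0, div_lt_one h0]
        exact h
      rw [show κ' (x / ε) = κ (x / ε) from Set.indicator_of_mem this κ]
    · rw [if_neg h, if_neg h]
  have hκb' : ∀ t, |κ' t| ≤ C := by
    intro t
    by_cases ht : t ∈ Set.Ioo (-1:ℝ) 1
    · rw [show κ' t = κ t from Set.indicator_of_mem ht κ]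
      exact hκb t ht
    · rw [show κ' t = 0 from Set.indicator_of_notMem ht κ, abs_zero]
      exact hC
  have hkey := key qm qp a ha κ' (hκm.indicator measurableSet_Ioo) C hκb' Q hQ'
  rw [hK]
  constructor
  · intro H
    let f : ContDiffBump (0:ℝ) := default
    have hf0 : f 0 = 1 := f.one_of_mem_closedBall (by simp [f.rIn_pos.le])
    have hfc : ContDiff ℝ (⊤ : ℕ∞) f := f.contDiff
    obtain ⟨l, hl⟩ := H f hfc f.hasCompactSupport
    obtain ⟨L, hL⟩ := hkey f (hfc.differentiable (by simp))
    by_contra hne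
    have h1 := hl.sub hL
    simp only [sub_sub_cancel, hf0, mul_one] at h1
    have hc : (∫ t in (-1 : ℝ)..1, κ' t) - (qp - qm) ≠ 0 :=
      fun h => hne (sub_eq_zero.1 h).symm
    have h2 := h1.const_mul ((∫ t in (-1 : ℝ)..1, κ' t) - (qp - qm))⁻¹
    simp only [inv_mul_cancel_left₀ hc] at h2
    exact not_tendsto_nhds_of_tendsto_atBot Real.tendsto_log_nhdsGT_zero _ h2
  · intro h ψ hψ _
    obtain ⟨L, hL⟩ := hkey ψ (hψ.differentiable (by simp))
    refine ⟨L, ?_⟩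
    simpa [h] using hL
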